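/- Let q(p) = p⁴ + p² + 1 and define H = q·q'' − (3/4)(q')², T = q²·q''' − (3/2)·q·q'·q'' + (3/4)(q')³, and V = q³·q'''' − q²·q'·q''' + (3/4)·q·(q')²·q'' − (9/32)(q')⁴. Then for every real p with H(p) ≠ 0: T₁(p) := T(p)²/H(p)³ = 324p²(p⁴ − 1)²/(2p⁴ + 11p² + 2)³ and T₂(p) := V(p)/H(p)² = 3(16p⁸ + 20p⁶ + 9p⁴ + 20p² + 16)/(2(2p⁴ + 11p² + 2)²), and these satisfy the cubic relation 9800·T₂³ − 19773·T₁² + 79092·T₁·T₂ − 64392·T₂² − 13182·T₁ + 33714·T₂ − 972 = 0. -/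

import Mathlib

/-- The inhomogeneous counterpart q(p) = p⁴ + p² + 1 of the binary quartic
x⁴ + x²y² + y⁴. -/
noncomputable def q19 : ℝ → ℝ := fun p => p ^ 4 + p ^ 2 + 1

/-- H = q·q'' − (3/4)(q')². -/
noncomputable def H19 (p : ℝ) : ℝ :=
  q19 p * deriv (deriv q19) p - (3 / 4) * (deriv q19 p) ^ 2

/-- T = q²·q''' − (3/2)·q·q'·q'' + (3/4)(q')³. -/
noncomputable def T19 (p : ℝ) : ℝ :=
  q19 p ^ 2 * deriv (deriv (deriv q19)) p -
    (3 / 2) * q19 p * deriv q19 p * deriv (deriv q19) p +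
    (3 / 4) * (deriv q19 p) ^ 3

/-- V = q³·q'''' − q²·q'·q''' + (3/4)·q·(q')²·q'' − (9/32)(q')⁴. -/
noncomputable def V19 (p : ℝ) : ℝ :=
  q19 p ^ 3 * deriv (deriv (deriv (deriv q19))) p -
    q19 p ^ 2 * deriv q19 p * deriv (deriv (deriv q19)) p +
    (3 / 4) * q19 p * (deriv q19 p) ^ 2 * deriv (deriv q19) p -
    (9 / 32) * (deriv q19 p) ^ 4

/-!
Translating a quartic to a point `p` turns `H`, `T`, `V` into seminvariants `h`, `t`, `v` of its
normalised Taylor coefficients, while the classical invariants `I`, `J` do not change. With `e` the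
value of the quartic at `p`, the syzygies `v + 3 h² = e² I` and `h v - t² - h³ = e³ J` express
`T₂` and `T₁` as polynomials in `e / h` with constant coefficients; eliminating `e / h` by means of
`(e² I)³ J² = I³ (e³ J)²` gives a cubic relation satisfied by the signature of every quartic.
-/

/-- The binary quartic `a x⁴ + 4b x³y + 6c x²y² + 4d xy³ + e y⁴`. The binomial factors are left out
of the coefficients, as is classical, so that the invariants have integer coefficients. -/
structure BinaryQuartic (R : Type*) where
  (a b c d e : R)

namespace BinaryQuartic

section CommRing

variable {R : Type*} [CommRing R]

/-- The quartic `f(x + p y, y)`. Its coefficients are the normalised Taylor coefficients of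
`f(·, 1)` at `p`; in particular `(f.taylorShift p).e` is the value `f(p, 1)`. -/
def taylorShift (f : BinaryQuartic R) (p : R) : BinaryQuartic R where
  a := f.a
  b := f.a * p + f.b
  c := f.a * p ^ 2 + 2 * f.b * p + f.c
  d := f.a * p ^ 3 + 3 * f.b * p ^ 2 + 3 * f.c * p + f.d
  e := f.a * p ^ 4 + 4 * f.b * p ^ 3 + 6 * f.c * p ^ 2 + 4 * f.d * p + f.e

/-- The quadratic invariant `I` of a binary quartic. -/
def invariantI (f : BinaryQuartic R) : R :=
  f.a * f.e - 4 * f.b * f.d + 3 * f.c ^ 2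

/-- The cubic invariant `J` of a binary quartic (its catalecticant). -/
def invariantJ (f : BinaryQuartic R) : R :=
  f.a * f.c * f.e + 2 * f.b * f.c * f.d - f.a * f.d ^ 2 - f.b ^ 2 * f.e - f.c ^ 3

/-- The seminvariant `h` of degree two: `h / e²` is the normalised coefficient of `y²` in the
depressed form `y⁴ + 6 (h / e²) y² + 4 (t / e³) y + v / e⁴` of the monic quartic `f(1, y) / e`. -/
def seminvariantH (f : BinaryQuartic R) : R :=
  f.e * f.c - f.d ^ 2

/-- The seminvariant `t` of degree three: `t / e³` is the normalised coefficient of `y` in the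
depressed form of `f(1, y) / e`. -/
def seminvariantT (f : BinaryQuartic R) : R :=
  f.e ^ 2 * f.b - 3 * f.e * f.d * f.c + 2 * f.d ^ 3

/-- The seminvariant `v` of degree four: `v / e⁴` is the constant coefficient of the depressed form
of `f(1, y) / e`. -/
def seminvariantV (f : BinaryQuartic R) : R :=
  f.e ^ 3 * f.a - 4 * f.e ^ 2 * f.d * f.b + 6 * f.e * f.d ^ 2 * f.c - 3 * f.d ^ 4

theorem invariantI_taylorShift (f : BinaryQuartic R) (p : R) :
    (f.taylorShift p).invariantI = f.invariantI := by
  simp only [invariantI, taylorShift]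
  ring

theorem invariantJ_taylorShift (f : BinaryQuartic R) (p : R) :
    (f.taylorShift p).invariantJ = f.invariantJ := by
  simp only [invariantJ, taylorShift]
  ring

theorem seminvariantV_add_three_mul_seminvariantH_sq (f : BinaryQuartic R) :
    f.seminvariantV + 3 * f.seminvariantH ^ 2 = f.e ^ 2 * f.invariantI := by
  simp only [seminvariantV, seminvariantH, invariantI]
  ring

theorem seminvariantH_mul_seminvariantV_sub (f : BinaryQuartic R) :
    f.seminvariantH * f.seminvariantV - f.seminvariantT ^ 2 - f.seminvariantH ^ 3 =
      f.e ^ 3 * f.invariantJ := by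
  simp only [seminvariantH, seminvariantV, seminvariantT, invariantJ]
  ring

theorem invariantI_cube_mul_eq_invariantJ_sq_mul (f : BinaryQuartic R) :
    f.invariantI ^ 3 *
        (f.seminvariantH * f.seminvariantV - f.seminvariantT ^ 2 - f.seminvariantH ^ 3) ^ 2 =
      f.invariantJ ^ 2 * (f.seminvariantV + 3 * f.seminvariantH ^ 2) ^ 3 := by
  rw [seminvariantH_mul_seminvariantV_sub, seminvariantV_add_three_mul_seminvariantH_sq]
  ring

end CommRing

theorem signature_relation {K : Type*} [Field K] (f : BinaryQuartic K)
    (hf : f.seminvariantH ≠ 0) :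
    f.invariantI ^ 3 * (f.seminvariantT ^ 2 / f.seminvariantH ^ 3 -
        f.seminvariantV / f.seminvariantH ^ 2 + 1) ^ 2 =
      f.invariantJ ^ 2 * (f.seminvariantV / f.seminvariantH ^ 2 + 3) ^ 3 := by
  field_simp
  linear_combination f.invariantI_cube_mul_eq_invariantJ_sq_mul

section Deriv

variable {𝕜 : Type*} [NontriviallyNormedField 𝕜] (f : BinaryQuartic 𝕜)

theorem hasDerivAt_taylorShift_e (p : 𝕜) :
    HasDerivAt (fun x => (f.taylorShift x).e) (4 * (f.taylorShift p).d) p := by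
  have h := (((((hasDerivAt_pow 4 p).const_mul f.a).add
    ((hasDerivAt_pow 3 p).const_mul (4 * f.b))).add
    ((hasDerivAt_pow 2 p).const_mul (6 * f.c))).add
    ((hasDerivAt_id' p).const_mul (4 * f.d))).add_const f.e
  refine h.congr_deriv ?_
  simp only [taylorShift]
  push_cast
  ring

theorem hasDerivAt_taylorShift_d (p : 𝕜) :
    HasDerivAt (fun x => (f.taylorShift x).d) (3 * (f.taylorShift p).c) p := by
  have h := ((((hasDerivAt_pow 3 p).const_mul f.a).add
    ((hasDerivAt_pow 2 p).const_mul (3 * f.b))).add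
    ((hasDerivAt_id' p).const_mul (3 * f.c))).add_const f.d
  refine h.congr_deriv ?_
  simp only [taylorShift]
  push_cast
  ring

theorem hasDerivAt_taylorShift_c (p : 𝕜) :
    HasDerivAt (fun x => (f.taylorShift x).c) (2 * (f.taylorShift p).b) p := by
  have h := (((hasDerivAt_pow 2 p).const_mul f.a).add
    ((hasDerivAt_id' p).const_mul (2 * f.b))).add_const f.c
  refine h.congr_deriv ?_
  simp only [taylorShift]
  push_cast
  ring

theorem hasDerivAt_taylorShift_b (p : 𝕜) :
    HasDerivAt (fun x => (f.taylorShift x).b) (f.taylorShift p).a p :=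
  (((hasDerivAt_id' p).const_mul f.a).add_const f.b).congr_deriv (mul_one _)

theorem deriv_taylorShift_e :
    deriv (fun x => (f.taylorShift x).e) = fun x => 4 * (f.taylorShift x).d :=
  funext fun x => (f.hasDerivAt_taylorShift_e x).deriv

theorem deriv_deriv_taylorShift_e :
    deriv (deriv fun x => (f.taylorShift x).e) = fun x => 12 * (f.taylorShift x).c := by
  rw [deriv_taylorShift_e]
  funext x
  exact ((f.hasDerivAt_taylorShift_d x).const_mul 4).deriv.trans (by ring)

theorem deriv_deriv_deriv_taylorShift_e :
    deriv (deriv (deriv fun x => (f.taylorShift x).e)) = fun x => 24 * (f.taylorShift x).b := by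
  rw [deriv_deriv_taylorShift_e]
  funext x
  exact ((f.hasDerivAt_taylorShift_c x).const_mul 12).deriv.trans (by ring)

theorem deriv_deriv_deriv_deriv_taylorShift_e :
    deriv (deriv (deriv (deriv fun x => (f.taylorShift x).e))) =
      fun x => 24 * (f.taylorShift x).a := by
  rw [deriv_deriv_deriv_taylorShift_e]
  exact funext fun x => ((f.hasDerivAt_taylorShift_b x).const_mul 24).deriv

end Deriv

end BinaryQuartic

open BinaryQuartic

/-- The binary quartic `x⁴ + x²y² + y⁴`, whose inhomogeneous counterpart is `q19`. -/
noncomputable def quartic19 : BinaryQuartic ℝ :=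
  ⟨1, 0, 1 / 6, 0, 1⟩

theorem invariantI_quartic19 : quartic19.invariantI = 13 / 12 := by
  norm_num [invariantI, quartic19]

theorem invariantJ_quartic19 : quartic19.invariantJ = 35 / 216 := by
  norm_num [invariantJ, quartic19]

theorem q19_eq_taylorShift_e : q19 = fun p => (quartic19.taylorShift p).e := by
  funext p
  simp only [q19, taylorShift, quartic19]
  ring

theorem H19_eq_seminvariantH (p : ℝ) : H19 p = 12 * (quartic19.taylorShift p).seminvariantH := by
  rw [H19, q19_eq_taylorShift_e, deriv_deriv_taylorShift_e, deriv_taylorShift_e, seminvariantH]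
  ring

theorem T19_eq_seminvariantT (p : ℝ) : T19 p = 24 * (quartic19.taylorShift p).seminvariantT := by
  rw [T19, q19_eq_taylorShift_e, deriv_deriv_deriv_taylorShift_e, deriv_deriv_taylorShift_e,
    deriv_taylorShift_e, seminvariantT]
  ring

theorem V19_eq_seminvariantV (p : ℝ) : V19 p = 24 * (quartic19.taylorShift p).seminvariantV := by
  rw [V19, q19_eq_taylorShift_e, deriv_deriv_deriv_deriv_taylorShift_e,
    deriv_deriv_deriv_taylorShift_e, deriv_deriv_taylorShift_e, deriv_taylorShift_e, seminvariantV]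
  ring

theorem H19_eq (p : ℝ) : H19 p = 2 * p ^ 4 + 11 * p ^ 2 + 2 := by
  simp only [H19_eq_seminvariantH, seminvariantH, taylorShift, quartic19]
  ring

theorem T19_eq (p : ℝ) : T19 p = 18 * p * (1 - p ^ 4) := by
  simp only [T19_eq_seminvariantT, seminvariantT, taylorShift, quartic19]
  ring

theorem V19_eq (p : ℝ) :
    V19 p = 3 / 2 * (16 * p ^ 8 + 20 * p ^ 6 + 9 * p ^ 4 + 20 * p ^ 2 + 16) := by
  simp only [V19_eq_seminvariantV, seminvariantV, taylorShift, quartic19]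
  ring

theorem T19_sq_div_H19_cube (p : ℝ) :
    T19 p ^ 2 / H19 p ^ 3 =
      (quartic19.taylorShift p).seminvariantT ^ 2 /
        (quartic19.taylorShift p).seminvariantH ^ 3 / 3 := by
  rw [T19_eq_seminvariantT, H19_eq_seminvariantH]
  ring

theorem V19_div_H19_sq (p : ℝ) :
    V19 p / H19 p ^ 2 =
      (quartic19.taylorShift p).seminvariantV /
        (quartic19.taylorShift p).seminvariantH ^ 2 / 6 := by
  rw [V19_eq_seminvariantV, H19_eq_seminvariantH]
  ring

theorem signature_relation_q19 {p : ℝ} (hH : H19 p ≠ 0) :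
    2197 * (3 * (T19 p ^ 2 / H19 p ^ 3) - 6 * (V19 p / H19 p ^ 2) + 1) ^ 2 =
      1225 * (2 * (V19 p / H19 p ^ 2) + 1) ^ 3 := by
  have hh : (quartic19.taylorShift p).seminvariantH ≠ 0 :=
    right_ne_zero_of_mul (H19_eq_seminvariantH p ▸ hH)
  have hrel := signature_relation _ hh
  rw [invariantI_taylorShift, invariantJ_taylorShift, invariantI_quartic19,
    invariantJ_quartic19] at hrel
  rw [T19_sq_div_H19_cube, V19_div_H19_sq]
  -- The scaling comes from `I³ = 2197 / 1728` and `27 J² = 1225 / 1728`.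
  linear_combination 1728 * hrel

/-- The signature of the binary quartic x⁴ + x²y² + y⁴: explicit parametrization of
the classifying invariants (T₁, T₂) = (T²/H³, V/H²) and the cubic signature relation. -/
theorem stmt_19 (p : ℝ) (hH : H19 p ≠ 0) :
    T19 p ^ 2 / H19 p ^ 3 =
      324 * p ^ 2 * (p ^ 4 - 1) ^ 2 / (2 * p ^ 4 + 11 * p ^ 2 + 2) ^ 3 ∧
    V19 p / H19 p ^ 2 =
      3 * (16 * p ^ 8 + 20 * p ^ 6 + 9 * p ^ 4 + 20 * p ^ 2 + 16) /
        (2 * (2 * p ^ 4 + 11 * p ^ 2 + 2) ^ 2) ∧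
    9800 * (V19 p / H19 p ^ 2) ^ 3 - 19773 * (T19 p ^ 2 / H19 p ^ 3) ^ 2 +
        79092 * (T19 p ^ 2 / H19 p ^ 3) * (V19 p / H19 p ^ 2) -
        64392 * (V19 p / H19 p ^ 2) ^ 2 - 13182 * (T19 p ^ 2 / H19 p ^ 3) +
        33714 * (V19 p / H19 p ^ 2) - 972 = 0 := by
  refine ⟨?_, ?_, ?_⟩
  · rw [T19_eq, H19_eq]
    ring
  · rw [V19_eq, H19_eq]
    field_simp
  · linear_combination -signature_relation_q19 hH
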